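/- arXiv:1906.10454 — 2 statements merged into one kernel-verified Lean document; each statement's English description precedes it below -/
import Mathlib

section
/- Let T ≥ 3 and K ≥ 1 be real numbers and α ∈ (0,1/2). Set λ := max( √(K log T / T), T^{-α} √(log T) ). Then λ > 0 and K log T / λ + λ^{(α−1)/α} (log T)^{1/(2α)} + λ T ≤ 3 ( √(TK) · log T + T^{1−α} (log T)^{1/(2α)} ). -/
/-!
The threshold is the larger of two balancing points. At `a = √(K L / T)` the terms `K L / λ` and
`λ T` are both equal to `√(T K) √L`; at `b = T^{-α} √L` the terms `λ^{(α-1)/α} L^{1/(2α)}` and `λ T`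
are both equal to `T^{1-α} √L`. The first two terms decrease in `λ`, so at `λ = max a b` they are at
most their values at `a` and `b`, while `λ T` is at most the sum of its values there. This gives
`2 √L (√(T K) + T^{1-α})`, and `√L` is at most `L` and `L^{1/(2α)}` once `L ≥ 1`.
-/

/-- The slow-mixing regret bound as a function of the threshold `lam`, with `L` standing for
`log T`. -/
noncomputable def slowMixingRegretBound (T K L α lam : ℝ) : ℝ :=
  K * L / lam + lam ^ ((α - 1) / α) * L ^ (1 / (2 * α)) + lam * T

/-- The threshold balancing the linear term of `slowMixingRegretBound` against each of the two
decreasing ones, with `L` standing for `log T`. -/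
noncomputable def balancedThreshold (T K L α : ℝ) : ℝ :=
  max √(K * L / T) (T ^ (-α) * √L)

section Balancing

variable {T L α : ℝ}

lemma sqrt_div_mul_self (hT : 0 < T) (c : ℝ) : √(c / T) * T = √(c * T) := by
  calc √(c / T) * T = √(c / T) * √(T ^ 2) := by rw [Real.sqrt_sq hT.le]
    _ = √(c / T * T ^ 2) := (Real.sqrt_mul' _ (sq_nonneg T)).symm
    _ = √(c * T) := by
      congr 1
      field_simp

lemma div_le_sqrt_mul_of_sqrt_div_le {c lam : ℝ} (hT : 0 < T) (hc : 0 ≤ c)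
    (hlam : √(c / T) ≤ lam) : c / lam ≤ √(c * T) := by
  refine div_le_of_le_mul₀ ((Real.sqrt_nonneg _).trans hlam) (Real.sqrt_nonneg _) ?_
  calc c = √(c / T) * √(c / T) * T := by
        rw [Real.mul_self_sqrt (by positivity), div_mul_cancel₀ _ hT.ne']
    _ = √(c * T) * √(c / T) := by rw [mul_right_comm, sqrt_div_mul_self hT]
    _ ≤ √(c * T) * lam := by gcongr

lemma rpow_neg_mul_mul_self (hT : 0 < T) (c : ℝ) : T ^ (-α) * c * T = T ^ (1 - α) * c := by
  rw [mul_right_comm, ← Real.rpow_add_one hT.ne', neg_add_eq_sub]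

lemma rpow_neg_mul_sqrt_rpow_mul (hT : 0 ≤ T) (hL : 0 < L) (hα : α ≠ 0) :
    (T ^ (-α) * √L) ^ ((α - 1) / α) * L ^ (1 / (2 * α)) = T ^ (1 - α) * √L := by
  have hT_exponent : -α * ((α - 1) / α) = 1 - α := by
    field_simp
    ring
  have hL_exponent : 1 / 2 * ((α - 1) / α) + 1 / (2 * α) = 1 / 2 := by
    field_simp
    ring
  rw [Real.mul_rpow (by positivity) (by positivity), Real.sqrt_eq_rpow, ← Real.rpow_mul hT,
    ← Real.rpow_mul hL.le, mul_assoc, ← Real.rpow_add hL, hT_exponent, hL_exponent]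

lemma rpow_mul_le_of_rpow_neg_mul_sqrt_le {lam : ℝ} (hT : 0 < T) (hL : 0 < L)
    (hα : α ∈ Set.Ioc 0 1) (hlam : T ^ (-α) * √L ≤ lam) :
    lam ^ ((α - 1) / α) * L ^ (1 / (2 * α)) ≤ T ^ (1 - α) * √L := by
  have hexponent : (α - 1) / α ≤ 0 :=
    div_nonpos_of_nonpos_of_nonneg (sub_nonpos.2 hα.2) hα.1.le
  rw [← rpow_neg_mul_sqrt_rpow_mul hT.le hL hα.1.ne']
  gcongr ?_ * _
  exact Real.rpow_le_rpow_of_nonpos (by positivity) hlam hexponent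

end Balancing

section Threshold

variable {T K L α : ℝ}

lemma balancedThreshold_pos (hT : 0 < T) (hL : 0 < L) : 0 < balancedThreshold T K L α :=
  lt_max_of_lt_right (by positivity)

lemma balancedThreshold_mul_le (hT : 0 < T) :
    balancedThreshold T K L α * T ≤ √(K * L * T) + T ^ (1 - α) * √L := by
  rw [← sqrt_div_mul_self hT, ← rpow_neg_mul_mul_self hT, ← add_mul]
  gcongr
  exact max_le_add_of_nonneg (by positivity) (by positivity)

lemma slowMixingRegretBound_balancedThreshold_le (hT : 0 < T) (hK : 0 ≤ K) (hL : 0 < L)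
    (hα : α ∈ Set.Ioc 0 1) :
    slowMixingRegretBound T K L α (balancedThreshold T K L α) ≤
      2 * (√(T * K) * √L + T ^ (1 - α) * √L) := by
  have hfirst : K * L / balancedThreshold T K L α ≤ √(K * L * T) :=
    div_le_sqrt_mul_of_sqrt_div_le hT (by positivity) (le_max_left _ _)
  have hsecond : balancedThreshold T K L α ^ ((α - 1) / α) * L ^ (1 / (2 * α)) ≤
      T ^ (1 - α) * √L :=
    rpow_mul_le_of_rpow_neg_mul_sqrt_le hT hL hα (le_max_right _ _)
  have hthird : balancedThreshold T K L α * T ≤ √(K * L * T) + T ^ (1 - α) * √L :=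
    balancedThreshold_mul_le hT
  have hsqrt : √(K * L * T) = √(T * K) * √L := by
    rw [← Real.sqrt_mul' _ hL.le, mul_comm, mul_assoc]
  rw [slowMixingRegretBound]
  linarith

end Threshold

lemma sqrt_le_rpow_one_div_two_mul {L α : ℝ} (hL : 1 ≤ L) (hα : α ∈ Set.Ioc 0 1) :
    √L ≤ L ^ (1 / (2 * α)) := by
  rw [Real.sqrt_eq_rpow]
  exact Real.rpow_le_rpow_of_exponent_le hL
    (one_div_le_one_div_of_le (mul_pos two_pos hα.1) (by linarith [hα.2]))

theorem threshold_optimization_general {T K L α : ℝ} (hT : 0 < T) (hK : 0 ≤ K) (hL : 1 ≤ L)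
    (hα : α ∈ Set.Ioc 0 1) :
    0 < balancedThreshold T K L α ∧
      slowMixingRegretBound T K L α (balancedThreshold T K L α) ≤
        2 * (√(T * K) * L + T ^ (1 - α) * L ^ (1 / (2 * α))) := by
  have hL0 : 0 < L := one_pos.trans_le hL
  refine ⟨balancedThreshold_pos hT hL0,
    (slowMixingRegretBound_balancedThreshold_le hT hK hL0 hα).trans ?_⟩
  gcongr
  · exact Real.sqrt_le_self_iff.2 (.inr hL)
  · exact sqrt_le_rpow_one_div_two_mul hL hα

lemma one_le_log_of_three_le {T : ℝ} (hT : 3 ≤ T) : 1 ≤ Real.log T :=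
  (Real.le_log_iff_exp_le (by linarith)).2 (by linarith [Real.exp_one_lt_three])

/-- Optimization over the threshold `λ` in the proof of the problem-independent upper
bound (Theorem 4): with `λ = max(√(K log T / T), T^{-α} √(log T))`, the slow-mixing
regret bound `K log T / λ + λ^{(α−1)/α} (log T)^{1/(2α)} + λ T` is at most
`3 (√(TK) log T + T^{1−α} (log T)^{1/(2α)})`. -/
theorem threshold_optimization
    (T K α : ℝ) (hT : 3 ≤ T) (hK : 1 ≤ K) (hα : α ∈ Set.Ioo (0 : ℝ) (1 / 2)) :
    0 < max (Real.sqrt (K * Real.log T / T)) (T ^ (-α) * Real.sqrt (Real.log T)) ∧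
    K * Real.log T / max (Real.sqrt (K * Real.log T / T)) (T ^ (-α) * Real.sqrt (Real.log T))
        + (max (Real.sqrt (K * Real.log T / T)) (T ^ (-α) * Real.sqrt (Real.log T)))
            ^ ((α - 1) / α) * Real.log T ^ (1 / (2 * α))
        + max (Real.sqrt (K * Real.log T / T)) (T ^ (-α) * Real.sqrt (Real.log T)) * T
      ≤ 3 * (Real.sqrt (T * K) * Real.log T + T ^ (1 - α) * Real.log T ^ (1 / (2 * α))) := by
  have hT0 : 0 < T := by linarith
  have hL : 1 ≤ Real.log T := one_le_log_of_three_le hT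
  obtain ⟨hpos, hle⟩ := threshold_optimization_general hT0 (zero_le_one.trans hK) hL
    ⟨hα.1, by linarith [hα.2]⟩
  exact ⟨hpos, hle.trans (by gcongr; norm_num)⟩
end

section
/- Let α ∈ (0,1/2), θ ∈ (0,1], and A, T > 0 with A T θ² ≥ 32. Then (θ/2)^{1−1/α} · (log(A T (θ/2)²))^{1/(2α)} ≥ (1/2) · (12/5)^{1/(2α)} · θ^{1−1/α} · (log(A T θ²))^{1/(2α)}, and in particular the left-hand side is strictly greater than θ^{1−1/α} (log(A T θ²))^{1/(2α)} since (1/2)(12/5)^{1/(2α)} > 6/5 > 1. -/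
/-!
With `p = 1/(2α)` the penalty is `θ^(1-2p) * (log x)^p` where `x = Λ θ²`. Dividing `θ` by `b`
multiplies `θ^(1-2p)` by exactly `(b²)^p / b` and divides `x` by `b²`. If `b^n ≤ x`, then
`log b ≤ (log x) / n`, so the logarithm keeps at least the fraction `1 - 2/n` of its value and the
penalty grows by a factor of at least `(b² (1 - 2/n))^p / b`. When `p > 1` this exceeds
`b (1 - 2/n)`. The values `b = 2`, `n = 5` give the threshold `32` and the constants `12/5`, `6/5`.
-/

open Real

/-- The penalty `q(θ)` charged for dependence in an epoch of accuracy `θ`. The paper's `A` and `T`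
enter only through their product `Λ`. -/
noncomputable def epochPenalty (α Λ θ : ℝ) : ℝ :=
  θ ^ (1 - 1 / α) * log (Λ * θ ^ 2) ^ (1 / (2 * α))

lemma one_sub_div_mul_log_le_log_div_pow {b x : ℝ} {n : ℕ} (hb : 0 < b) (hn : n ≠ 0)
    (hx : b ^ n ≤ x) (k : ℕ) : (1 - k / n) * log x ≤ log (x / b ^ k) := by
  have hbn : 0 < b ^ n := by positivity
  have hlog : n * log b ≤ log x := by
    simpa only [log_pow] using log_le_log hbn hx
  calc (1 - k / n) * log x = log x - k / n * log x := by ring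
    _ ≤ log x - k / n * (n * log b) := by gcongr
    _ = log x - k * log b := by field_simp
    _ = log (x / b ^ k) := by rw [log_div (hbn.trans_le hx).ne' (by positivity), log_pow]

lemma div_rpow_one_sub_two_mul {θ b : ℝ} (hθ : 0 ≤ θ) (hb : 0 < b) (p : ℝ) :
    (θ / b) ^ (1 - 2 * p) = 1 / b * (b ^ 2) ^ p * θ ^ (1 - 2 * p) := by
  have hbp : b ^ (1 - 2 * p) = b / (b ^ 2) ^ p := by
    rw [rpow_sub hb, rpow_one, rpow_mul hb.le, rpow_two]
  rw [div_rpow hθ hb.le, hbp]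
  field_simp

lemma epochPenalty_pos {α Λ θ : ℝ} (hθ : 0 < θ) (hx : 1 < Λ * θ ^ 2) : 0 < epochPenalty α Λ θ :=
  mul_pos (rpow_pos_of_pos hθ _) (rpow_pos_of_pos (log_pos hx) _)

lemma mul_epochPenalty_le_epochPenalty_div {α Λ θ b : ℝ} {n : ℕ} (hα : 0 < α) (hθ : 0 ≤ θ)
    (hb : 1 ≤ b) (hn : 2 ≤ n) (hx : b ^ n ≤ Λ * θ ^ 2) :
    1 / b * (b ^ 2 * (1 - 2 / n)) ^ (1 / (2 * α)) * epochPenalty α Λ θ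
      ≤ epochPenalty α Λ (θ / b) := by
  have hb0 : 0 < b := one_pos.trans_le hb
  have hfrac : 0 ≤ 1 - 2 / (n : ℝ) :=
    sub_nonneg.2 (div_le_one_of_le₀ (by exact_mod_cast hn) n.cast_nonneg)
  have hlog : 0 ≤ log (Λ * θ ^ 2) := log_nonneg ((one_le_pow₀ hb).trans hx)
  have hshrink : (1 - 2 / n) * log (Λ * θ ^ 2) ≤ log (Λ * (θ / b) ^ 2) := by
    rw [div_pow, ← mul_div_assoc]
    exact_mod_cast one_sub_div_mul_log_le_log_div_pow hb0 (by lia) hx 2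
  have hexp : 1 - 1 / α = 1 - 2 * (1 / (2 * α)) := by field_simp
  unfold epochPenalty
  rw [hexp]
  set p := 1 / (2 * α)
  calc 1 / b * (b ^ 2 * (1 - 2 / n)) ^ p * (θ ^ (1 - 2 * p) * log (Λ * θ ^ 2) ^ p)
      = 1 / b * (b ^ 2) ^ p * θ ^ (1 - 2 * p) * ((1 - 2 / n) * log (Λ * θ ^ 2)) ^ p := by
        rw [mul_rpow (by positivity) hfrac, mul_rpow hfrac hlog]
        ring
    _ = (θ / b) ^ (1 - 2 * p) * ((1 - 2 / n) * log (Λ * θ ^ 2)) ^ p := by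
        rw [div_rpow_one_sub_two_mul hθ hb0]
    _ ≤ (θ / b) ^ (1 - 2 * p) * log (Λ * (θ / b) ^ 2) ^ p := by gcongr

theorem epoch_penalty_geometric_growth_general {α Λ θ b : ℝ} {n : ℕ}
    (hα : α ∈ Set.Ioo (0 : ℝ) (1 / 2)) (hθ : 0 < θ) (hb : 1 < b) (hn : 2 ≤ n)
    (hratio : 1 ≤ b * (1 - 2 / n)) (hx : b ^ n ≤ Λ * θ ^ 2) :
    1 / b * (b ^ 2 * (1 - 2 / n)) ^ (1 / (2 * α)) * epochPenalty α Λ θ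
        ≤ epochPenalty α Λ (θ / b) ∧
      epochPenalty α Λ θ < epochPenalty α Λ (θ / b) ∧
      b * (1 - 2 / n) < 1 / b * (b ^ 2 * (1 - 2 / n)) ^ (1 / (2 * α)) := by
  have hpos : 0 < epochPenalty α Λ θ := epochPenalty_pos hθ ((one_lt_pow₀ hb (by lia)).trans_le hx)
  have hp : 1 < 1 / (2 * α) := one_lt_one_div (by linarith [hα.1]) (by linarith [hα.2])
  have hbase : 1 < b ^ 2 * (1 - 2 / n) := by
    rw [sq, mul_assoc]
    exact one_lt_mul_of_lt_of_le hb hratio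
  have hfactor : b * (1 - 2 / n) < 1 / b * (b ^ 2 * (1 - 2 / n)) ^ (1 / (2 * α)) :=
    calc b * (1 - 2 / n) = 1 / b * (b ^ 2 * (1 - 2 / n)) := by field_simp
      _ < 1 / b * (b ^ 2 * (1 - 2 / n)) ^ (1 / (2 * α)) := by
        gcongr
        exact self_lt_rpow_of_one_lt hbase hp
  have hgrowth := mul_epochPenalty_le_epochPenalty_div hα.1 hθ.le hb.le hn hx
  exact ⟨hgrowth, (lt_mul_of_one_lt_left hpos (hratio.trans_lt hfactor)).trans_le hgrowth, hfactor⟩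

/-- Geometric growth of the per-epoch penalty `q(θ) = θ^{1−1/α} (log(A T θ²))^{1/(2α)}`
along the dyadic accuracy levels, in the regime `A T θ² ≥ 32` (proof of Theorem 3). -/
theorem epoch_penalty_geometric_growth
    (α θ A T : ℝ) (hα : α ∈ Set.Ioo (0 : ℝ) (1 / 2)) (hθ : θ ∈ Set.Ioc (0 : ℝ) 1)
    (hA : 0 < A) (hT : 0 < T) (h32 : 32 ≤ A * T * θ ^ 2) :
    (1 / 2) * (12 / 5 : ℝ) ^ (1 / (2 * α)) * θ ^ (1 - 1 / α) *
        Real.log (A * T * θ ^ 2) ^ (1 / (2 * α))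
      ≤ (θ / 2) ^ (1 - 1 / α) * Real.log (A * T * (θ / 2) ^ 2) ^ (1 / (2 * α)) ∧
    θ ^ (1 - 1 / α) * Real.log (A * T * θ ^ 2) ^ (1 / (2 * α))
      < (θ / 2) ^ (1 - 1 / α) * Real.log (A * T * (θ / 2) ^ 2) ^ (1 / (2 * α)) ∧
    (6 / 5 : ℝ) < (1 / 2) * (12 / 5 : ℝ) ^ (1 / (2 * α)) := by
  have hbase : (2 : ℝ) ^ 2 * (1 - 2 / (5 : ℕ)) = 12 / 5 := by norm_num
  have hratio : (2 : ℝ) * (1 - 2 / (5 : ℕ)) = 6 / 5 := by norm_num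
  simpa only [hbase, hratio, epochPenalty, mul_assoc] using
    epoch_penalty_geometric_growth_general (b := 2) (Λ := A * T)
      hα hθ.1 one_lt_two (by norm_num : 2 ≤ 5) (by norm_num) (by linarith)
end
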